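/- arXiv:2211.15922 — 2 statements merged into one kernel-verified Lean document; each statement's English description precedes it below -/
import Mathlib

section
/- In any residuated lattice L, for all x, y ∈ L the intersection of the filters generated by x and by y equals the filter generated by x ∨ y, i.e. ⟨x⟩ ∩ ⟨y⟩ = ⟨x ∨ y⟩. -/
/-- A residuated lattice: a bounded lattice with a commutative monoid
operation `mul` whose identity is the top element, and a residuum `himp`
satisfying `mul x y ≤ z ↔ x ≤ himp y z`. Here `⊤` plays the role of `1`
and `⊥` the role of `0`. -/
class ResiduatedLattice (L : Type*) extends Lattice L, BoundedOrder L where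
  mul : L → L → L
  himp : L → L → L
  mul_comm : ∀ x y : L, mul x y = mul y x
  mul_assoc : ∀ x y z : L, mul (mul x y) z = mul x (mul y z)
  mul_top : ∀ x : L, mul x ⊤ = x
  residuation : ∀ x y z : L, mul x y ≤ z ↔ x ≤ himp y z

namespace ResiduatedLattice

variable {L : Type*} [ResiduatedLattice L]

/-- A filter of a residuated lattice: a nonempty, upward closed subset
closed under `mul`. -/
def IsFilter (F : Set L) : Prop :=
  F.Nonempty ∧ (∀ x y : L, x ∈ F → x ≤ y → y ∈ F) ∧
    ∀ x y : L, x ∈ F → y ∈ F → mul x y ∈ F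

/-- A prime filter: a proper filter such that `x ⊔ y ∈ P` implies
`x ∈ P` or `y ∈ P`. -/
def IsPrimeFilter (P : Set L) : Prop :=
  IsFilter P ∧ P ≠ Set.univ ∧ ∀ x y : L, x ⊔ y ∈ P → x ∈ P ∨ y ∈ P

/-- `filterGen X` is the smallest filter containing `X`. -/
def filterGen (X : Set L) : Set L := ⋂₀ {F : Set L | IsFilter F ∧ X ⊆ F}

/-- The prime spectrum: the set of all prime filters. -/
def Spectrum (L : Type*) [ResiduatedLattice L] := {P : Set L // IsPrimeFilter P}

/-- `D X = {P ∈ Spec L | X ⊄ P}`. -/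
def D (X : Set L) : Set (Spectrum L) := {P : Spectrum L | ¬ X ⊆ P.1}

/-- `O P = {x | a ⊔ x = 1 for some a ∉ P}`. -/
def O (P : Set L) : Set L := {x : L | ∃ a ∉ P, a ⊔ x = ⊤}

/-- The congruence relation associated to a filter `F`:
`x ≡_F y` iff `(x → y) ⊗ (y → x) ∈ F`. -/
def rel (F : Set L) (x y : L) : Prop := mul (himp x y) (himp y x) ∈ F

end ResiduatedLattice

/-!
Multiplication distributes over `⊔` and lies below both factors, so
`(a ⊔ c) ⊗ (b ⊔ c) ≤ (a ⊗ b) ⊔ c`. Hence for a filter `F` the set `{a | a ⊔ c ∈ F}` is again a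
filter. Let `z ∈ ⟨X⟩ ∩ ⟨Y⟩` and let `F` contain all joins `x ⊔ y`. Taking `c = y` gives
`z ⊔ y ∈ F` for every `y ∈ Y`; taking then `c = z` gives `z = z ⊔ z ∈ F`.
-/

namespace ResiduatedLattice

section

open scoped SetFamily

variable {L : Type*} [ResiduatedLattice L] {F X Y : Set L} {a b : L}

theorem gc_mul_himp (c : L) : GaloisConnection (mul · c) (himp c) :=
  fun a b => residuation a c b

theorem sup_mul (a b c : L) : mul (a ⊔ b) c = mul a c ⊔ mul b c :=
  (gc_mul_himp c).l_sup

theorem mul_sup (a b c : L) : mul a (b ⊔ c) = mul a b ⊔ mul a c := by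
  simp only [mul_comm a, sup_mul]

theorem mul_le_right (a b : L) : mul a b ≤ b :=
  calc
    mul a b ≤ mul ⊤ b := (gc_mul_himp b).monotone_l le_top
    _ = b := by rw [mul_comm, mul_top]

theorem mul_le_left (a b : L) : mul a b ≤ a :=
  mul_comm a b ▸ mul_le_right b a

theorem mul_sup_sup_le (a b c : L) : mul (a ⊔ c) (b ⊔ c) ≤ mul a b ⊔ c :=
  calc
    mul (a ⊔ c) (b ⊔ c) = mul a (b ⊔ c) ⊔ mul c (b ⊔ c) := sup_mul a c (b ⊔ c)
    _ = mul a b ⊔ mul a c ⊔ mul c (b ⊔ c) := by rw [mul_sup a]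
    _ ≤ mul a b ⊔ c ⊔ c :=
      sup_le_sup (sup_le_sup_left (mul_le_right a c) _) (mul_le_left c (b ⊔ c))
    _ = mul a b ⊔ c := by rw [sup_assoc, sup_idem]

theorem IsFilter.mem_of_le (hF : IsFilter F) (ha : a ∈ F) (hab : a ≤ b) : b ∈ F :=
  hF.2.1 a b ha hab

theorem IsFilter.mul_mem (hF : IsFilter F) (ha : a ∈ F) (hb : b ∈ F) : mul a b ∈ F :=
  hF.2.2 a b ha hb

theorem IsFilter.top_mem (hF : IsFilter F) : ⊤ ∈ F :=
  let ⟨_, ha⟩ := hF.1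
  hF.mem_of_le ha le_top

theorem IsFilter.setOf_sup_mem (hF : IsFilter F) (c : L) : IsFilter {a | a ⊔ c ∈ F} := by
  refine ⟨⟨⊤, hF.mem_of_le hF.top_mem le_sup_left⟩, fun a b ha hab => ?_, fun a b ha hb => ?_⟩
  · exact hF.mem_of_le ha (sup_le_sup_right hab c)
  · exact hF.mem_of_le (hF.mul_mem ha hb) (mul_sup_sup_le a b c)

theorem isFilter_sInter {S : Set (Set L)} (hS : ∀ F ∈ S, IsFilter F) : IsFilter (⋂₀ S) :=
  ⟨⟨⊤, fun F hF => (hS F hF).top_mem⟩,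
    fun _ _ ha hab F hF => (hS F hF).mem_of_le (ha F hF) hab,
    fun _ _ ha hb F hF => (hS F hF).mul_mem (ha F hF) (hb F hF)⟩

theorem isFilter_filterGen (X : Set L) : IsFilter (filterGen X) :=
  isFilter_sInter fun _ hF => hF.1

theorem subset_filterGen (X : Set L) : X ⊆ filterGen X :=
  Set.subset_sInter fun _ hF => hF.2

theorem IsFilter.filterGen_subset (hF : IsFilter F) (hX : X ⊆ F) : filterGen X ⊆ F :=
  Set.sInter_subset_of_mem ⟨hF, hX⟩

theorem IsFilter.sup_mem_of_mem_filterGen (hF : IsFilter F) (hX : ∀ x ∈ X, x ⊔ b ∈ F)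
    (ha : a ∈ filterGen X) : a ⊔ b ∈ F :=
  (hF.setOf_sup_mem b).filterGen_subset hX ha

theorem filterGen_sups_subset_left (X Y : Set L) : filterGen (X ⊻ Y) ⊆ filterGen X :=
  (isFilter_filterGen X).filterGen_subset <| Set.sups_subset_iff.2 fun _ hx _ _ =>
    (isFilter_filterGen X).mem_of_le (subset_filterGen X hx) le_sup_left

theorem filterGen_sups_subset_right (X Y : Set L) : filterGen (X ⊻ Y) ⊆ filterGen Y :=
  Set.sups_comm X Y ▸ filterGen_sups_subset_left Y X

theorem filterGen_inter_subset_filterGen_sups (X Y : Set L) :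
    filterGen X ∩ filterGen Y ⊆ filterGen (X ⊻ Y) := by
  rintro z ⟨hzX, hzY⟩ F ⟨hF, hXY⟩
  have sup_mem : ∀ y ∈ Y, z ⊔ y ∈ F := fun y hy =>
    hF.sup_mem_of_mem_filterGen (fun x hx => hXY (Set.sup_mem_sups hx hy)) hzX
  have sup_self_mem : z ⊔ z ∈ F :=
    hF.sup_mem_of_mem_filterGen (fun y hy => sup_comm z y ▸ sup_mem y hy) hzY
  rwa [sup_idem] at sup_self_mem

theorem filterGen_inter_filterGen_general (X Y : Set L) :
    filterGen X ∩ filterGen Y = filterGen (X ⊻ Y) :=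
  (filterGen_inter_subset_filterGen_sups X Y).antisymm <|
    Set.subset_inter (filterGen_sups_subset_left X Y) (filterGen_sups_subset_right X Y)

end

/-- `⟨x⟩ ∩ ⟨y⟩ = ⟨x ∨ y⟩`. -/
theorem filterGen_inter_filterGen {L : Type*} [ResiduatedLattice L] (x y : L) :
    filterGen {x} ∩ filterGen {y} = filterGen ({x ⊔ y} : Set L) := by
  rw [filterGen_inter_filterGen_general, Set.singleton_sups_singleton]

end ResiduatedLattice
end

section
/- Let L be a residuated lattice and P ∈ Spec(L). Then O(P) = {x ∈ L : a ∨ x = 1 for some a ∈ L − P} is a proper filter of L and O(P) ⊆ P. -/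
namespace ResiduatedLattice

/-!
If `a ⊔ x = 1` and `b ⊔ y = 1`, then `1 = (a ⊔ x) ⊗ (b ⊔ y) ≤ (a ⊔ b) ⊔ (x ⊗ y)`, because `⊗`
preserves joins in each argument and lies below both of its factors. Primality of `P` keeps `a ⊔ b`
outside `P`, so `O(P)` is closed under `⊗`; applied to `a ⊔ x = 1 ∈ P`, it gives `O(P) ⊆ P`.
-/

section Multiplication

variable {L : Type*} [ResiduatedLattice L]

theorem top_mul (x : L) : mul ⊤ x = x := by
  rw [mul_comm, mul_top]

theorem mul_le_right_s9 (x y : L) : mul x y ≤ y := by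
  have top_le_himp_self : ⊤ ≤ himp y y := (residuation ⊤ y y).1 (top_mul y).le
  exact (residuation x y y).2 (le_top.trans top_le_himp_self)

theorem mul_le_left_s9 (x y : L) : mul x y ≤ x :=
  mul_comm x y ▸ mul_le_right_s9 y x

theorem sup_mul_le_iff {x y z w : L} : mul (x ⊔ y) z ≤ w ↔ mul x z ≤ w ∧ mul y z ≤ w := by
  simp only [residuation, sup_le_iff]

theorem mul_sup_le_iff {x y z w : L} : mul x (y ⊔ z) ≤ w ↔ mul x y ≤ w ∧ mul x z ≤ w := by
  simp only [mul_comm x, sup_mul_le_iff]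

theorem sup_mul_sup_le (a x b y : L) : mul (a ⊔ x) (b ⊔ y) ≤ a ⊔ b ⊔ mul x y := by
  refine sup_mul_le_iff.2 ⟨?_, mul_sup_le_iff.2 ⟨?_, le_sup_right⟩⟩
  · exact (mul_le_left_s9 a _).trans (le_sup_left.trans le_sup_left)
  · exact (mul_le_right_s9 x b).trans (le_sup_right.trans le_sup_left)

theorem sup_sup_mul_eq_top {a x b y : L} (hax : a ⊔ x = ⊤) (hby : b ⊔ y = ⊤) :
    a ⊔ b ⊔ mul x y = ⊤ := by
  refine top_le_iff.1 ?_
  calc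
    ⊤ = mul (a ⊔ x) (b ⊔ y) := by rw [hax, hby, mul_top]
    _ ≤ a ⊔ b ⊔ mul x y := sup_mul_sup_le a x b y

end Multiplication

section PrimeSets

variable {L : Type*} [ResiduatedLattice L] {P : Set L}

theorem IsFilter.top_mem_s9 (hP : IsFilter P) : ⊤ ∈ P := by
  obtain ⟨⟨x, hx⟩, mem_of_le, _⟩ := hP
  exact mem_of_le x ⊤ hx le_top

theorem top_mem_O (hne : P ≠ Set.univ) : ⊤ ∈ O P := by
  obtain ⟨a, ha⟩ := (Set.ne_univ_iff_exists_notMem P).1 hne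
  exact ⟨a, ha, sup_top_eq a⟩

theorem mem_O_of_le {x y : L} (hx : x ∈ O P) (hxy : x ≤ y) : y ∈ O P := by
  obtain ⟨a, ha, hax⟩ := hx
  exact ⟨a, ha, eq_top_mono (sup_le_sup_left hxy a) hax⟩

theorem mul_mem_O (hprime : ∀ x y : L, x ⊔ y ∈ P → x ∈ P ∨ y ∈ P) {x y : L}
    (hx : x ∈ O P) (hy : y ∈ O P) : mul x y ∈ O P := by
  obtain ⟨a, ha, hax⟩ := hx
  obtain ⟨b, hb, hby⟩ := hy
  have sup_notMem : a ⊔ b ∉ P := fun hab => (hprime a b hab).elim ha hb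
  exact ⟨a ⊔ b, sup_notMem, sup_sup_mul_eq_top hax hby⟩

theorem isFilter_O (hne : P ≠ Set.univ) (hprime : ∀ x y : L, x ⊔ y ∈ P → x ∈ P ∨ y ∈ P) :
    IsFilter (O P) :=
  ⟨⟨⊤, top_mem_O hne⟩, fun _ _ => mem_O_of_le, fun _ _ => mul_mem_O hprime⟩

theorem O_subset (htop : ⊤ ∈ P) (hprime : ∀ x y : L, x ⊔ y ∈ P → x ∈ P ∨ y ∈ P) : O P ⊆ P := by
  rintro x ⟨a, ha, hax⟩
  exact (hprime a x (hax ▸ htop)).resolve_left ha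

theorem O_isProperFilter_subset_general (htop : ⊤ ∈ P) (hne : P ≠ Set.univ)
    (hprime : ∀ x y : L, x ⊔ y ∈ P → x ∈ P ∨ y ∈ P) :
    IsFilter (O P) ∧ O P ≠ Set.univ ∧ O P ⊆ P := by
  have hsub : O P ⊆ P := O_subset htop hprime
  exact ⟨isFilter_O hne hprime, fun huniv => hne (Set.univ_subset_iff.1 (huniv ▸ hsub)), hsub⟩

end PrimeSets

/-- for a prime filter `P`, the set
`O(P) = {x | a ∨ x = 1 for some a ∉ P}` is a proper filter contained in `P`. -/
theorem O_isProperFilter_subset {L : Type*} [ResiduatedLattice L]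
    (P : Set L) (hP : IsPrimeFilter P) :
    IsFilter (O P) ∧ O P ≠ Set.univ ∧ O P ⊆ P := by
  obtain ⟨hfilter, hne, hprime⟩ := hP
  exact O_isProperFilter_subset_general hfilter.top_mem_s9 hne hprime

end ResiduatedLattice
end
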